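/- (Frank–Geisinger form of the projection inequality) Let T ≥ 0 be a self-adjoint operator, P an orthogonal projection, and f an operator monotone function on [0,∞) with f(0)=0. Then P f(T) P ≤ f(PTP) as quadratic forms. -/

import Mathlib

open scoped InnerProductSpace
open ContinuousLinearMap InnerProductSpace

section FGHelpers

variable {H : Type*} [NormedAddCommGroup H] [InnerProductSpace ℂ H] [CompleteSpace H]

/-- Intertwining relations pass through the continuous functional calculus. -/
lemma fg_intertwine (f : ℝ → ℝ) (Y Z E : H →L[ℂ] H) (hY : IsSelfAdjoint Y)
    (hZ : IsSelfAdjoint Z) (hfY : ContinuousOn f (spectrum ℝ Y))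
    (hfZ : ContinuousOn f (spectrum ℝ Z)) (h : Y * E = E * Z) :
    cfc f Y * E = E * cfc f Z := by
  have hcY : IsCompact (spectrum ℝ Y) := spectrum.isCompact Y
  have hcZ : IsCompact (spectrum ℝ Z) := spectrum.isCompact Z
  let s : Set ℝ := spectrum ℝ Y ∪ spectrum ℝ Z
  have hs : IsCompact s := hcY.union hcZ
  haveI : CompactSpace s := isCompact_iff_compactSpace.mp hs
  have hfs : ContinuousOn f s := hfY.union_of_isClosed hfZ hcY.isClosed hcZ.isClosed
  let iY : C(spectrum ℝ Y, s) :=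
    ⟨Set.inclusion Set.subset_union_left, continuous_inclusion _⟩
  let iZ : C(spectrum ℝ Z, s) :=
    ⟨Set.inclusion Set.subset_union_right, continuous_inclusion _⟩
  have key : ∀ g : C(s, ℝ), cfcHom hY (g.comp iY) * E = E * cfcHom hZ (g.comp iZ) := by
    intro g
    have hid : cfcHom hY (((ContinuousMap.id ℝ).restrict s).comp iY) * E
        = E * cfcHom hZ (((ContinuousMap.id ℝ).restrict s).comp iZ) := by
      have e1 : ((ContinuousMap.id ℝ).restrict s).comp iY
          = (ContinuousMap.id ℝ).restrict (spectrum ℝ Y) := rfl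
      have e2 : ((ContinuousMap.id ℝ).restrict s).comp iZ
          = (ContinuousMap.id ℝ).restrict (spectrum ℝ Z) := rfl
      rw [e1, e2, cfcHom_id hY, cfcHom_id hZ, h]
    induction g using ContinuousMap.induction_on_of_compact with
    | const r =>
      have e1 : (ContinuousMap.const s r).comp iY = algebraMap ℝ _ r := rfl
      have e2 : (ContinuousMap.const s r).comp iZ = algebraMap ℝ _ r := rfl
      rw [e1, e2, AlgHomClass.commutes, AlgHomClass.commutes]
      exact Algebra.commutes r E
    | id => exact hid
    | star_id => rw [star_trivial]; exact hid
    | add g₁ g₂ h₁ h₂ =>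
      rw [ContinuousMap.add_comp, ContinuousMap.add_comp, map_add, map_add, add_mul, mul_add,
        h₁, h₂]
    | mul g₁ g₂ h₁ h₂ =>
      rw [ContinuousMap.mul_comp, ContinuousMap.mul_comp, map_mul, map_mul, mul_assoc, h₂,
        ← mul_assoc, h₁, mul_assoc]
    | frequently g hg =>
      have hc : IsClosed {g : C(s, ℝ) |
          cfcHom hY (g.comp iY) * E = E * cfcHom hZ (g.comp iZ)} := by
        apply isClosed_eq
        · exact ((cfcHom_continuous hY).comp (ContinuousMap.continuous_precomp iY)).mul
            continuous_const
        · exact continuous_const.mul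
            ((cfcHom_continuous hZ).comp (ContinuousMap.continuous_precomp iZ))
      exact hc.mem_of_frequently_of_tendsto hg Filter.tendsto_id
  rw [cfc_apply f Y hY hfY, cfc_apply f Z hZ hfZ]
  exact key ⟨_, hfs.domRestrict⟩

lemma fg_spec_finite (Y : H →L[ℂ] H) (a b : ℝ)
    (h : (Y - algebraMap ℝ _ a) * (Y - algebraMap ℝ _ b) = 0) :
    (spectrum ℝ Y) ⊆ {a, b} := by
  intro k hk
  have h1 := spectrum.subset_polynomial_aeval Y
    ((Polynomial.X - Polynomial.C a) * (Polynomial.X - Polynomial.C b)) ⟨k, hk, rfl⟩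
  simp only [map_mul, map_sub, Polynomial.aeval_X, Polynomial.aeval_C, h] at h1
  have : Nontrivial (H →L[ℂ] H) := by
    by_contra hn
    rw [not_nontrivial_iff_subsingleton] at hn
    simp [spectrum.of_subsingleton] at hk
  rw [spectrum.zero_eq] at h1
  simp [sub_eq_zero] at h1
  simpa using h1

lemma fg_cont2 (f : ℝ → ℝ) (E : H →L[ℂ] H) (hE : IsStarProjection E) (a b : ℝ) :
    ContinuousOn f (spectrum ℝ (a • E + b • (1 - E))) := by
  refine Set.Finite.continuousOn ?_ f
  refine (Set.toFinite {a, b}).subset (fg_spec_finite _ a b ?_)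
  have h1 : a • E + b • (1 - E) - algebraMap ℝ _ a = (b - a) • (1 - E) := by
    rw [Algebra.algebraMap_eq_smul_one]; module
  have h2 : a • E + b • (1 - E) - algebraMap ℝ _ b = (a - b) • E := by
    rw [Algebra.algebraMap_eq_smul_one]; module
  have h3 : (1 - E) * E = 0 := by rw [sub_mul, one_mul, hE.isIdempotentElem.eq, sub_self]
  rw [h1, h2, smul_mul_smul_comm, h3, smul_zero]

lemma fg_cfc2 (f : ℝ → ℝ) (E : H →L[ℂ] H) (hE : IsStarProjection E) (a b : ℝ) :
    cfc f (a • E + b • (1 - E)) = f a • E + f b • (1 - E) := by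
  have hEE := hE.isIdempotentElem.eq
  have hsa : IsSelfAdjoint (a • E + b • (1 - E)) :=
    ((IsSelfAdjoint.all a).smul hE.isSelfAdjoint).add
      ((IsSelfAdjoint.all b).smul ((IsSelfAdjoint.one _).sub hE.isSelfAdjoint))
  have hc : ∀ r : ℝ, ContinuousOn f (spectrum ℝ (algebraMap ℝ (H →L[ℂ] H) r)) := fun r =>
    continuousOn_singleton _ _ |>.mono <| CFC.spectrum_algebraMap_subset r
  have k1 := fg_intertwine f (a • E + b • (1 - E)) (algebraMap ℝ _ a) E hsa
    (cfc_predicate_algebraMap a) (fg_cont2 f E hE a b) (hc a)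
    (by simp [Algebra.algebraMap_eq_smul_one, add_mul, sub_mul, hEE])
  have k2 := fg_intertwine f (a • E + b • (1 - E)) (algebraMap ℝ _ b) (1 - E) hsa
    (cfc_predicate_algebraMap b) (fg_cont2 f E hE a b) (hc b)
    (by simp [Algebra.algebraMap_eq_smul_one, add_mul, mul_sub, sub_mul, hEE])
  rw [cfc_algebraMap, Algebra.algebraMap_eq_smul_one, mul_smul_comm, mul_one] at k1 k2
  rw [← k1, ← k2, ← mul_add]
  simp

lemma fg_cfc1 (f : ℝ → ℝ) (hf0 : f 0 = 0) (E : H →L[ℂ] H) (hE : IsStarProjection E) (a : ℝ) :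
    cfc f (a • E) = f a • E := by
  simpa [hf0] using fg_cfc2 f E hE a 0

lemma fg_split (T P : H →L[ℂ] H) (hT0 : 0 ≤ T) (hP : IsStarProjection P) (e : ℝ) (he : 0 < e) :
    T ≤ (1 + e) • (P * T * P) + (1 + e⁻¹) • ((1 - P) * T * (1 - P)) := by
  have hs : Real.sqrt e ≠ 0 := (Real.sqrt_pos.mpr he).ne'
  have hsa : IsSelfAdjoint (Real.sqrt e • P - (Real.sqrt e)⁻¹ • (1 - P)) :=
    ((IsSelfAdjoint.all _).smul hP.isSelfAdjoint).sub
      ((IsSelfAdjoint.all _).smul ((IsSelfAdjoint.one _).sub hP.isSelfAdjoint))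
  have h := hsa.conjugate_nonneg hT0
  rw [← sub_nonneg]
  convert h using 1
  obtain ⟨Q, hQ⟩ : ∃ Q, Q = 1 - P := ⟨_, rfl⟩
  rw [← hQ]
  have hT : T = (P + Q) * T * (P + Q) := by simp [hQ]
  have e1 : Real.sqrt e * Real.sqrt e = e := Real.mul_self_sqrt he.le
  have e2 : (Real.sqrt e)⁻¹ * (Real.sqrt e)⁻¹ = e⁻¹ := by rw [← mul_inv, e1]
  nth_rewrite 3 [hT]
  simp only [add_mul, mul_add, sub_mul, mul_sub, smul_mul_assoc, mul_smul_comm, smul_sub,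
    smul_smul, e1, e2, mul_inv_cancel₀ hs, inv_mul_cancel₀ hs]
  module

lemma fg_scalar_le {x : H} (hx : ‖x‖ = 1) (A B : H →L[ℂ] H) (h : A ≤ B) :
    RCLike.re ⟪A x, x⟫_ℂ ≤ RCLike.re ⟪B x, x⟫_ℂ := by
  have := ((ContinuousLinearMap.le_def A B).1 h).2 x
  simp [ContinuousLinearMap.reApplyInnerSelf, inner_sub_left] at this
  simpa using this

lemma fg_mono (f : ℝ → ℝ)
    (hmono : ∀ (X Y : H →L[ℂ] H), 0 ≤ X → X ≤ Y → cfc f X ≤ cfc f Y)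
    (u : H) (hu : ‖u‖ = 1) (x y : ℝ) (hx : 0 ≤ x) (hxy : x ≤ y) : f x ≤ f y := by
  have h := hmono (algebraMap ℝ _ x) (algebraMap ℝ _ y) (algebraMap_nonneg _ hx)
    (algebraMap_mono _ hxy)
  rw [cfc_algebraMap, cfc_algebraMap] at h
  have := fg_scalar_le hu _ _ h
  simpa [Algebra.algebraMap_eq_smul_one, inner_smul_left_eq_smul, hu] using this

lemma fg_ratio (f : ℝ → ℝ) (hf0 : f 0 = 0)
    (hmono : ∀ (X Y : H →L[ℂ] H), 0 ≤ X → X ≤ Y → cfc f X ≤ cfc f Y)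
    (P : H →L[ℂ] H) (hP : IsStarProjection P)
    (u w : H) (hu : ‖u‖ = 1) (hw : ‖w‖ = 1) (hPu : P u = u) (hPw : P w = 0)
    (z y : ℝ) (hz : 0 < z) (hzy : z < y) : z / y * f y ≤ f z := by
  have hy : 0 < y := hz.trans hzy
  have huw : ⟪u, w⟫_ℂ = 0 := by
    rw [← hPu]
    have := hP.isSelfAdjoint.isSymmetric u w
    simpa [hPw] using this
  have main : ∀ t ∈ Set.Ioo 0 (z / y), t * f y ≤ f z := by
    rintro t ⟨ht0, ht⟩
    have hzy1 : z / y < 1 := (div_lt_one hy).2 hzy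
    have ht1 : t < 1 := ht.trans hzy1
    have hty : t * y < z := (lt_div_iff₀ hy).1 ht
    have htp : 0 < t * y := mul_pos ht0 hy
    let v : H := (Real.sqrt t : ℂ) • u + (Real.sqrt (1 - t) : ℂ) • w
    have hst : ((Real.sqrt t : ℂ)) * (Real.sqrt t : ℂ) = t := by
      rw [← Complex.ofReal_mul, Real.mul_self_sqrt ht0.le]
    have hv : ‖v‖ = 1 := by
      have h1 : ‖v‖ * ‖v‖ = 1 := by
        simp only [v]
        rw [norm_add_sq_eq_norm_sq_add_norm_sq_of_inner_eq_zero (𝕜 := ℂ)]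
        · rw [norm_smul, norm_smul, hu, hw]
          simp only [Complex.norm_real, Real.norm_eq_abs, abs_of_nonneg (Real.sqrt_nonneg _),
            mul_one]
          rw [Real.mul_self_sqrt ht0.le, Real.mul_self_sqrt (by linarith)]
          ring
        · rw [inner_smul_left, inner_smul_right, huw, mul_zero, mul_zero]
      nlinarith [norm_nonneg v]
    have hPv : P v = (Real.sqrt t : ℂ) • u := by simp [v, hPu, hPw]
    have hVp : IsStarProjection (rankOne ℂ v v) := isStarProjection_rankOne_self hv
    have hUp : IsStarProjection (rankOne ℂ u u) := isStarProjection_rankOne_self hu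
    have hadj : adjoint P = P := hP.isSelfAdjoint.adjoint_eq
    have hconj : ∀ x, P * rankOne ℂ x x * P = rankOne ℂ (P x) (P x) := by
      intro x
      ext k
      have := hP.isSelfAdjoint.isSymmetric x k
      simp only [ContinuousLinearMap.coe_coe] at this
      simp [this]
    have hPVP : P * rankOne ℂ v v * P ≤ t • P := by
      have e1 : P * rankOne ℂ v v * P = t • (P * rankOne ℂ u u * P) := by
        rw [hconj, hconj, hPv, hPu]
        ext k
        simp only [rankOne_apply, inner_smul_left, Complex.conj_ofReal, ContinuousLinearMap.smul_apply,
          smul_smul]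
        rw [mul_right_comm, hst, mul_smul, Complex.coe_smul]
      rw [e1]
      have e2 := hP.isSelfAdjoint.conjugate_le_conjugate hUp.le_one
      rw [mul_one, hP.isIdempotentElem.eq] at e2
      exact smul_le_smul_of_nonneg_left e2 ht0.le
    have hQ := hP.one_sub
    have hQVQ : (1 - P) * rankOne ℂ v v * (1 - P) ≤ 1 - P := by
      have e2 := hQ.isSelfAdjoint.conjugate_le_conjugate hVp.le_one
      rwa [mul_one, hQ.isIdempotentElem.eq] at e2
    let e : ℝ := z / (t * y) - 1
    have he : 0 < e := by
      have : 1 < z / (t * y) := (one_lt_div htp).2 hty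
      simp only [e]; linarith
    have h1 := fg_split _ P hVp.nonneg hP e he
    have h2 : rankOne ℂ v v ≤ ((1 + e) * t) • P + (1 + e⁻¹) • (1 - P) := by
      refine h1.trans (add_le_add ?_ ?_)
      · rw [mul_smul]
        exact smul_le_smul_of_nonneg_left hPVP (by positivity)
      · exact smul_le_smul_of_nonneg_left hQVQ (by positivity)
    have h3 : y • rankOne ℂ v v ≤ z • P + (y * (1 + e⁻¹)) • (1 - P) := by
      have h4 := smul_le_smul_of_nonneg_left h2 hy.le
      rw [smul_add, smul_smul, smul_smul] at h4
      have : y * ((1 + e) * t) = z := by simp only [e]; field_simp; ring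
      rwa [this] at h4
    have h5 := hmono _ _ (smul_nonneg hy.le hVp.nonneg) h3
    rw [fg_cfc1 f hf0 _ hVp, fg_cfc2 f P hP] at h5
    have h6 := fg_scalar_le hu _ _ h5
    have hvu : ⟪v, u⟫_ℂ = Real.sqrt t := by
      have huw' : ⟪w, u⟫_ℂ = 0 := inner_eq_zero_symm.1 huw
      simp [v, inner_add_left, inner_smul_left, huw', hu]
    have huv : ⟪v, u⟫_ℂ * ⟪v, u⟫_ℂ = t := by rw [hvu, hst]
    have h7 : RCLike.re ⟪(f y • rankOne ℂ v v) u, u⟫_ℂ = f y * t := by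
      have : ⟪(f y • rankOne ℂ v v) u, u⟫_ℂ = ((f y * t : ℝ) : ℂ) := by
        rw [ContinuousLinearMap.smul_apply, rankOne_apply, hvu, ← Complex.coe_smul,
          inner_smul_left, inner_smul_left, hvu, Complex.conj_ofReal, Complex.conj_ofReal, hst]
        simp
      rw [this]; simp
    have h8 : RCLike.re ⟪(f z • P + f (y * (1 + e⁻¹)) • (1 - P)) u, u⟫_ℂ = f z := by
      have : (f z • P + f (y * (1 + e⁻¹)) • (1 - P)) u = ((f z : ℝ) : ℂ) • u := by
        simp [hPu]
      rw [this, inner_smul_left, inner_self_eq_norm_sq_to_K, hu]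
      simp
    rw [h7, h8] at h6
    linarith
  have hcl : Filter.Tendsto (fun t : ℝ => t * f y) (nhdsWithin (z / y) (Set.Iio (z / y)))
      (nhds (z / y * f y)) :=
    ((continuous_id.mul continuous_const).tendsto (z / y)).mono_left nhdsWithin_le_nhds
  refine le_of_tendsto hcl ?_
  filter_upwards [Ioo_mem_nhdsLT (div_pos hz hy)] with t ht using main t ht

lemma fg_cont (f : ℝ → ℝ) (hf0 : f 0 = 0)
    (hmono : ∀ (X Y : H →L[ℂ] H), 0 ≤ X → X ≤ Y → cfc f X ≤ cfc f Y)
    (hm : ∀ x y, 0 ≤ x → x ≤ y → f x ≤ f y)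
    (hr : ∀ z y, 0 < z → z < y → z / y * f y ≤ f z)
    (A : H →L[ℂ] H) (hA : 0 ≤ A) : ContinuousOn f (spectrum ℝ A) := by
  by_contra hcon
  have hc0 := cfc_apply_of_not_continuousOn (R := ℝ) (p := IsSelfAdjoint) A hcon
  have hzero : ∃ c > 0, f c ≤ 0 := by
    let S := CFC.sqrt A
    have hSS : S * S = A := CFC.sqrt_mul_sqrt_self A hA
    have hS : IsSelfAdjoint S := (CFC.sqrt_nonneg A).isSelfAdjoint
    have hS0 : S ≠ 0 := by
      intro h
      apply hcon
      have : A = algebraMap ℝ _ 0 := by rw [← hSS, h]; simp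
      rw [this]
      exact continuousOn_singleton _ _ |>.mono <| CFC.spectrum_algebraMap_subset 0
    obtain ⟨w0, hw0⟩ : ∃ w, S w ≠ 0 := by
      by_contra! h
      exact hS0 (ContinuousLinearMap.ext h)
    have hw0' : w0 ≠ 0 := fun h => hw0 (by simp [h])
    let w : H := ((‖w0‖ : ℂ)⁻¹) • w0
    have hw : ‖w‖ = 1 := by simp [w, norm_smul, hw0']
    have hSw : S w ≠ 0 := by simp [w, hw0, hw0']
    let v : H := ((‖S w‖ : ℂ)⁻¹) • S w
    have hv : ‖v‖ = 1 := by simp [v, norm_smul, hSw]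
    have hSv : S w = (‖S w‖ : ℂ) • v := by simp [v, smul_smul, hSw]
    clear_value v
    have hVp : IsStarProjection (rankOne ℂ v v) := isStarProjection_rankOne_self hv
    have hWp : IsStarProjection (rankOne ℂ w w) := isStarProjection_rankOne_self hw
    have hle : (‖S w‖ * ‖S w‖) • rankOne ℂ v v ≤ A := by
      have e2 := hS.conjugate_le_conjugate hWp.le_one
      rw [mul_one, hSS] at e2
      convert e2 using 1
      ext k
      have h1 := hS.isSymmetric w k
      simp only [ContinuousLinearMap.coe_coe] at h1
      simp only [ContinuousLinearMap.smul_apply, rankOne_apply, ContinuousLinearMap.mul_apply,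
        map_smul, ← h1]
      have h2 : ⟪S w, k⟫_ℂ = (‖S w‖ : ℂ) * ⟪v, k⟫_ℂ := by
        conv_lhs => rw [hSv, inner_smul_left, Complex.conj_ofReal]
      rw [h2, ← Complex.coe_smul, smul_smul]
      conv_rhs => rw [hSv, smul_smul, ← hSv]
      congr 1
      push_cast
      ring
    have hpos : 0 < ‖S w‖ * ‖S w‖ := by
      have := norm_pos_iff.2 hSw
      positivity
    refine ⟨_, hpos, ?_⟩
    have h5 := hmono _ _ (smul_nonneg hpos.le hVp.nonneg) hle
    rw [fg_cfc1 f hf0 _ hVp, hc0] at h5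
    have h6 := fg_scalar_le hv _ _ h5
    have h7 : (f (‖S w‖ * ‖S w‖) • rankOne ℂ v v) v
        = ((f (‖S w‖ * ‖S w‖) : ℝ) : ℂ) • v := by
      rw [ContinuousLinearMap.smul_apply, rankOne_apply, inner_self_eq_norm_sq_to_K, hv]
      simp
    rw [h7, inner_smul_left, inner_self_eq_norm_sq_to_K, hv] at h6
    simpa using h6
  obtain ⟨c, hc, hfc⟩ := hzero
  apply hcon
  refine (continuousOn_const (c := (0 : ℝ))).congr fun x hx => ?_
  have hx0 : 0 ≤ x := spectrum_nonneg_of_nonneg hA hx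
  have h1 : 0 ≤ f x := hf0 ▸ hm 0 x le_rfl hx0
  refine le_antisymm ?_ h1
  rcases le_or_gt x c with h | h
  · exact (hm x c hx0 h).trans hfc
  · have h2 := (hr c x hc h).trans hfc
    have h3 : 0 < c / x := div_pos hc (hc.trans h)
    by_contra! h4
    have := mul_pos h3 h4
    linarith

end FGHelpers

/-- **Frank–Geisinger projection inequality.** If `T ≥ 0` is a (bounded) self-adjoint
operator, `P` an orthogonal projection, and `f` operator monotone on `[0,∞)` with
`f 0 = 0`, then `P f(T) P ≤ f(PTP)`. Operator monotonicity is expressed via the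
continuous functional calculus. -/
theorem frank_geisinger_projection
    {H : Type*} [NormedAddCommGroup H] [InnerProductSpace ℂ H] [CompleteSpace H]
    (f : ℝ → ℝ) (hf0 : f 0 = 0)
    (hmono : ∀ (X Y : H →L[ℂ] H), 0 ≤ X → X ≤ Y → cfc f X ≤ cfc f Y)
    (P T : H →L[ℂ] H) (hP : IsIdempotentElem P) (hPsa : IsSelfAdjoint P)
    (hT : IsSelfAdjoint T) (hT0 : 0 ≤ T) :
    P * cfc f T * P ≤ cfc f (P * T * P) := by
  by_cases hP0 : P = 0
  · simp [hP0, hf0]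
  by_cases hP1 : P = 1
  · simp [hP1]
  have hPP : IsStarProjection P := ⟨hP, hPsa⟩
  have hQ := hPP.one_sub
  have unit : ∀ E : H →L[ℂ] H, IsIdempotentElem E → E ≠ 0 → ∃ u, ‖u‖ = 1 ∧ E u = u := by
    intro E hE hE0
    obtain ⟨x, hx⟩ : ∃ x, E x ≠ 0 := by
      by_contra! h
      exact hE0 (ContinuousLinearMap.ext h)
    refine ⟨((‖E x‖ : ℂ)⁻¹) • E x, by simp [norm_smul, hx], ?_⟩
    rw [map_smul]
    congr 1
    exact congrArg (fun B : H →L[ℂ] H => B x) hE.eq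
  obtain ⟨u, hu, hPu⟩ := unit P hP hP0
  obtain ⟨w, hw, hQw⟩ := unit (1 - P) hQ.isIdempotentElem
    (fun h => hP1 (sub_eq_zero.1 h).symm)
  have hPw : P w = 0 := by simpa using hQw
  have hm := fg_mono f hmono u hu
  have hr := fg_ratio f hf0 hmono P hPP u w hu hw hPu hPw
  have hcont := fg_cont f hf0 hmono hm hr
  have hA0 : 0 ≤ P * T * P := hPsa.conjugate_nonneg hT0
  have hB0 : 0 ≤ (1 - P) * T * (1 - P) := hQ.isSelfAdjoint.conjugate_nonneg hT0
  have main : ∀ e : ℝ, 0 < e → P * cfc f T * P ≤ (1 + e) • cfc f (P * T * P) := by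
    intro e he
    have hZ0 : 0 ≤ (1 + e) • (P * T * P) := smul_nonneg (by positivity) hA0
    have hY0 : 0 ≤ (1 + e) • (P * T * P) + (1 + e⁻¹) • ((1 - P) * T * (1 - P)) :=
      add_nonneg hZ0 (smul_nonneg (by positivity) hB0)
    have h1 := hPsa.conjugate_le_conjugate (hmono _ _ hT0 (fg_split T P hT0 hPP e he))
    have hQP : (1 - P) * P = 0 := by rw [sub_mul, one_mul, hP.eq, sub_self]
    have hPQ : P * (1 - P) = 0 := by rw [mul_sub, mul_one, hP.eq, sub_self]
    have h2 := fg_intertwine f _ ((1 + e) • (P * T * P)) P hY0.isSelfAdjoint hZ0.isSelfAdjoint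
      (hcont _ hY0) (hcont _ hZ0) (by
        rw [add_mul, smul_mul_assoc, smul_mul_assoc, mul_assoc _ (1 - P) P, hQP, mul_zero,
          smul_zero, add_zero, mul_smul_comm, mul_assoc _ P P, hP.eq, ← mul_assoc P, ← mul_assoc P,
          hP.eq])
    have h3 := fg_intertwine f 0 ((1 + e) • (P * T * P)) (1 - P) (IsSelfAdjoint.zero _)
      hZ0.isSelfAdjoint (hcont _ le_rfl) (hcont _ hZ0) (by
        rw [zero_mul, mul_smul_comm, ← mul_assoc, ← mul_assoc, hQP]; simp)
    rw [cfc_apply_zero, hf0, map_zero, zero_mul, sub_mul, one_mul, eq_comm, sub_eq_zero] at h3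
    rw [mul_assoc P (cfc f (_ + _)), h2, ← mul_assoc, hP.eq, ← h3] at h1
    refine h1.trans ?_
    have himg : ContinuousOn f (((1 + e) * ·) '' spectrum ℝ (P * T * P)) := by
      have := hcont _ hZ0
      have h6 := spectrum.unit_smul_eq_smul (R := ℝ) (P * T * P)
        (Units.mk0 (1 + e) (by positivity))
      have h7 : spectrum ℝ ((1 + e) • (P * T * P))
          = ((1 + e) * ·) '' spectrum ℝ (P * T * P) := h6
      rwa [h7] at this
    rw [← cfc_comp_const_mul (1 + e) f (P * T * P) himg hA0.isSelfAdjoint,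
      ← cfc_const_mul (1 + e) f (P * T * P) (hcont _ hA0)]
    refine cfc_mono ?_ ?_ ?_
    · intro x hx
      have hx0 : 0 ≤ x := spectrum_nonneg_of_nonneg hA0 hx
      rcases hx0.eq_or_lt with h | h
      · simp [← h, hf0]
      · have h4 := hr x ((1 + e) * x) h (by nlinarith)
        have h5 : x / ((1 + e) * x) = (1 + e)⁻¹ := by field_simp
        rw [h5, inv_mul_le_iff₀ (by positivity)] at h4
        exact h4
    · exact himg.comp (continuous_const.mul continuous_id).continuousOn
        (Set.mapsTo_image _ _)
    · exact continuousOn_const.mul (hcont _ hA0)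
  have hcl : Filter.Tendsto (fun e : ℝ => (1 + e) • cfc f (P * T * P))
      (nhdsWithin 0 (Set.Ioi 0)) (nhds (cfc f (P * T * P))) := by
    have : Continuous (fun e : ℝ => (1 + e) • cfc f (P * T * P)) := by fun_prop
    have h := (this.tendsto 0).mono_left (nhdsWithin_le_nhds (s := Set.Ioi 0))
    simpa using h
  refine ge_of_tendsto hcl ?_
  filter_upwards [self_mem_nhdsWithin] with e he using main e he
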